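/- Three-dimensional early-time piece estimate: fix 2 < r < 6. For any t > 0, any A > 0, any measurable interval I ⊆ [0, min(t/2, A)], and any measurable u : I × ℝ³ → ℂ, one has ‖ ∫_I e^{i(t−s)Δ} (|u|^{4/3}u)(s) ds ‖_{L^r_x(ℝ³)} ≤ C t^{−3(1/2−1/r)} A^{3(r−2)/(4r)} ‖u‖^{7/3}_{L^{28r/(3(r+6))}_s L^{7r/(3(r−1))}_x(I×ℝ³)}, with C depending only on r. -/

import Mathlib

open MeasureTheory Set
open scoped ENNReal Real

noncomputable section

/-- The free Schrödinger propagator `e^{itΔ}` acting on functions on a `d`-dimensional space: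
for `t ≠ 0`, `(e^{itΔ}f)(x) = (4πit)^{-d/2} ∫ e^{i|x-y|²/(4t)} f(y) dy`, and `e^{i0Δ}f = f`. -/
def schrod {E : Type*} [NormedAddCommGroup E] [MeasureSpace E] (d : ℕ) (t : ℝ) (f : E → ℂ) :
    E → ℂ :=
  if t = 0 then f
  else fun x =>
    (4 * (Real.pi : ℂ) * Complex.I * (t : ℂ)) ^ (-(d : ℂ) / 2) *
      ∫ y, Complex.exp (Complex.I * ((‖x - y‖ ^ 2 : ℝ) : ℂ) / (4 * (t : ℂ))) * f y

/-- Mixed Lebesgue norm `‖u‖_{L^p_t L^q_x (I × space)}`. -/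
def mixedNorm {α : Type*} [MeasurableSpace α] (ν : Measure α) (I : Set ℝ) (p q : ℝ≥0∞)
    (u : ℝ → α → ℂ) : ℝ≥0∞ :=
  if p = ∞ then essSup (fun t => eLpNorm (u t) q ν) (volume.restrict I)
  else (∫⁻ t in I, eLpNorm (u t) q ν ^ p.toReal) ^ (1 / p.toReal)

/-- Lorentz quasinorm `p^{1/q} ‖ λ · ν({g > λ})^{1/p} ‖_{L^q((0,∞), dλ/λ)}`
for an `ℝ≥0∞`-valued function `g`. -/
def lorentzNorm {α : Type*} [MeasurableSpace α] (ν : Measure α) (p q : ℝ≥0∞)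
    (g : α → ℝ≥0∞) : ℝ≥0∞ :=
  if q = ∞ then
    ⨆ l ∈ Set.Ioi (0 : ℝ), ENNReal.ofReal l * ν {x | ENNReal.ofReal l < g x} ^ p⁻¹.toReal
  else
    (p * ∫⁻ l in Set.Ioi (0 : ℝ),
        (ENNReal.ofReal l * ν {x | ENNReal.ofReal l < g x} ^ p⁻¹.toReal) ^ q.toReal /
          ENNReal.ofReal l) ^ q⁻¹.toReal

/-- Lorentz quasinorm `‖f‖_{L^{p,q}}` of a scalar function. -/
def lorentzNormC {α : Type*} [MeasurableSpace α] (ν : Measure α) (p q : ℝ≥0∞)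
    (f : α → ℂ) : ℝ≥0∞ :=
  lorentzNorm ν p q fun x => (‖f x‖₊ : ℝ≥0∞)

/-- Lorentz-in-time mixed norm `‖u‖_{L^{p,q}_t L^r_x (I × space)}`. -/
def lorentzMixedNorm {α : Type*} [MeasurableSpace α] (ν : Measure α) (I : Set ℝ)
    (p q r : ℝ≥0∞) (u : ℝ → α → ℂ) : ℝ≥0∞ :=
  lorentzNorm (volume.restrict I) p q fun t => eLpNorm (u t) r ν

/-- The nonlinearity `|f|^a f`. -/
def nonlin {E : Type*} (a : ℝ) (f : E → ℂ) : E → ℂ := fun x => ((‖f x‖ ^ a : ℝ) : ℂ) * f x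


open FourierTransform SchwartzMap

abbrev E3 := EuclideanSpace ℝ (Fin 3)

theorem plancherel_aux (f : E3 → ℂ) (h1 : Integrable f) (h2 : MemLp f 2) :
    eLpNorm (𝓕 f) 2 volume = eLpNorm f 2 volume := by
  have hcont : Continuous (𝓕 f) :=
    VectorFourier.fourierIntegral_continuous (μ := (volume : Measure E3)) (L := innerₗ E3) Real.continuous_fourierChar
      (by exact continuous_inner) h1
  set g : Lp (α := E3) ℂ 2 volume := 𝓕 (h2.toLp f) with hg
  have key : ∀ᵐ x, 𝓕 f x = g x := by
    apply ae_eq_of_integral_contDiff_smul_eq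
    · exact hcont.locallyIntegrable
    · exact (Lp.memLp g).locallyIntegrable (by norm_num)
    intro φ hφ hc
    have hc' : HasCompactSupport (fun x => (φ x : ℂ)) := hc.comp_left (g := fun x : ℝ => (x : ℂ)) (by simp)
    let ψ : 𝓢(E3, ℂ) := hc'.toSchwartzMap (Complex.ofRealCLM.contDiff.comp hφ)
    have hψ : ∀ x, ψ x = φ x := fun x => rfl
    have e1 : ∫ x, φ x • g x = ∫ x, ψ x • g x := by
      simp [hψ]
    have e2 : ∫ x, ψ x • g x = ∫ x, (𝓕 ψ) x • (h2.toLp f) x := by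
      rw [← Lp.toTemperedDistribution_apply, ← Lp.toTemperedDistribution_apply, hg,
        ← Lp.fourier_toTemperedDistribution_eq]
      rfl
    have e3 : ∫ x, (𝓕 ψ) x • (h2.toLp f) x = ∫ x, (𝓕 ψ) x • f x := by
      apply integral_congr_ae
      filter_upwards [h2.coeFn_toLp] with x hx
      rw [hx]
    have e4 : ∫ x, 𝓕 f x • ψ x = ∫ x, f x • (𝓕 (ψ : E3 → ℂ)) x := by
      have := VectorFourier.integral_fourierIntegral_smul_eq_flip (μ := (volume : Measure E3)) (ν := (volume : Measure E3)) (L := innerₗ E3) (f := f) (g := ψ) Real.continuous_fourierChar (by exact continuous_inner) h1 ψ.integrable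
      rw [flip_innerₗ] at this
      exact this
    rw [e1, e2, e3]
    rw [SchwartzMap.fourier_coe]
    calc _ = ∫ x, 𝓕 f x • ψ x := by simp [hψ, mul_comm]
      _ = _ := by rw [e4]; simp only [smul_eq_mul, mul_comm]
  rw [eLpNorm_congr_ae key]
  have := Lp.norm_fourier_eq (h2.toLp f)
  rw [Lp.norm_def, Lp.norm_def, ENNReal.toReal_eq_toReal_iff' (Lp.eLpNorm_ne_top _) (Lp.eLpNorm_ne_top _)] at this
  rw [this]
  exact eLpNorm_congr_ae h2.coeFn_toLp

theorem minkowski_aux {X : Type*} [MeasurableSpace X] (μ : Measure X) (ν : Measure ℝ) [SFinite μ] [IsFiniteMeasure ν]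
    (G : ℝ → X → ℝ≥0∞) (hG : Measurable (Function.uncurry G)) (r : ℝ) (hr : 1 < r)
    (W : ℝ → ℝ≥0∞) (hW : Measurable W)
    (h : ∀ᵐ s ∂ν, ∫⁻ x, G s x ^ r ∂μ ≤ W s ^ r) :
    ∫⁻ x, (∫⁻ s, G s x ∂ν) ^ r ∂μ ≤ (∫⁻ s, W s ∂ν) ^ r := by
  -- strictly positive W first
  have main : ∀ V : ℝ → ℝ≥0∞, Measurable V → (∀ s, V s ≠ 0) → 
      (∀ᵐ s ∂ν, ∫⁻ x, G s x ^ r ∂μ ≤ V s ^ r) → 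
      ∫⁻ x, (∫⁻ s, G s x ∂ν) ^ r ∂μ ≤ (∫⁻ s, V s ∂ν) ^ r := by
    intro V hV h0 hV'
    by_cases htop : ∫⁻ s, V s ∂ν = ∞
    · rw [htop, ENNReal.top_rpow_of_pos (by linarith)]; exact le_top
    have hfin : ∀ᵐ s ∂ν, V s ≠ ∞ := by
      filter_upwards [ae_lt_top hV htop] with s hs using hs.ne
    have hpt : ∀ x, (∫⁻ s, G s x ∂ν) ^ r ≤ (∫⁻ s, V s ∂ν) ^ (r-1) * ∫⁻ s, G s x ^ r * V s ^ (-(r-1)) ∂ν := by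
      intro x
      have hgx : Measurable (fun s => G s x) := hG.comp (measurable_id.prodMk measurable_const)
      have hconj : (r).HolderConjugate (r/(r-1)) := Real.HolderConjugate.conjExponent hr
      have hold := ENNReal.lintegral_mul_le_Lp_mul_Lq ν hconj
        (f := fun s => G s x * V s ^ (-((r-1)/r))) (g := fun s => V s ^ ((r-1)/r))
        (by fun_prop) (by fun_prop)
      have e1 : ∫⁻ s, G s x ∂ν = ∫⁻ s, ((fun s => G s x * V s ^ (-((r-1)/r))) * (fun s => V s ^ ((r-1)/r))) s ∂ν := by
        apply lintegral_congr_ae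
        filter_upwards [hfin] with s hs
        simp only [Pi.mul_apply]
        rw [mul_assoc, ← ENNReal.rpow_add _ _ (h0 s) hs]
        simp
      rw [e1]
      have hr0 : r ≠ 0 := by linarith
      have hr1 : r - 1 ≠ 0 := by linarith
      calc _ ≤ _ := ENNReal.rpow_le_rpow hold (by linarith)
        _ = _ := by
          rw [ENNReal.mul_rpow_of_nonneg _ _ (by linarith), ← ENNReal.rpow_mul, ← ENNReal.rpow_mul, mul_comm]
          congr 1
          · congr 1
            · apply lintegral_congr; intro s
              rw [← ENNReal.rpow_mul]
              convert ENNReal.rpow_one _ using 2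
              field_simp
            · field_simp
          · rw [one_div_mul_cancel hr0, ENNReal.rpow_one]
            apply lintegral_congr; intro s
            rw [ENNReal.mul_rpow_of_nonneg _ _ (by linarith), ← ENNReal.rpow_mul]
            congr 2
            field_simp
    calc _ ≤ ∫⁻ x, (∫⁻ s, V s ∂ν) ^ (r-1) * ∫⁻ s, G s x ^ r * V s ^ (-(r-1)) ∂ν ∂μ := lintegral_mono hpt
      _ = (∫⁻ s, V s ∂ν) ^ (r-1) * ∫⁻ s, ∫⁻ x, G s x ^ r * V s ^ (-(r-1)) ∂μ ∂ν := by
        have hm : Measurable (Function.uncurry fun (x : X) (s : ℝ) => G s x ^ r * V s ^ (-(r-1))) := by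
          have : Measurable (fun p : X × ℝ => G p.2 p.1) := hG.comp measurable_swap
          exact (this.pow_const r).mul ((hV.comp measurable_snd).pow_const _)
        rw [lintegral_const_mul _ (by exact hm.lintegral_prod_right), lintegral_lintegral_swap hm.aemeasurable]
      _ ≤ (∫⁻ s, V s ∂ν) ^ (r-1) * ∫⁻ s, V s ∂ν := by
        refine mul_le_mul' le_rfl ?_
        apply lintegral_mono_ae
        filter_upwards [hV', hfin] with s hs hs'
        have hgx : Measurable (fun x => G s x) := hG.comp (measurable_const.prodMk measurable_id)
        rw [lintegral_mul_const _ (by fun_prop)]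
        calc _ ≤ V s ^ r * V s ^ (-(r-1)) := by gcongr
          _ = V s := by
            rw [← ENNReal.rpow_add _ _ (h0 s) hs']
            simp
      _ = _ := by
        by_cases hz : ∫⁻ s, V s ∂ν = 0
        · rw [hz, mul_zero, ENNReal.zero_rpow_of_pos (by linarith)]
        · nth_rw 2 [← ENNReal.rpow_one (∫⁻ s, V s ∂ν)]
          rw [← ENNReal.rpow_add _ _ hz htop]; simp
  have step : ∀ n : ℕ, ∫⁻ x, (∫⁻ s, G s x ∂ν) ^ r ∂μ ≤ (∫⁻ s, W s ∂ν + ((n:ℝ≥0∞) + 1)⁻¹ * ν univ) ^ r := by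
    intro n
    have := main (fun s => W s + ((n:ℝ≥0∞) + 1)⁻¹) (by fun_prop) (by intro s; simp) (by
      filter_upwards [h] with s hs
      exact hs.trans (by gcongr; simp))
    rwa [lintegral_add_left hW, lintegral_const] at this
  have lim : Filter.Tendsto (fun n : ℕ => (∫⁻ s, W s ∂ν + ((n:ℝ≥0∞) + 1)⁻¹ * ν univ) ^ r) Filter.atTop (nhds ((∫⁻ s, W s ∂ν + 0 * ν univ) ^ r)) := by
    apply Filter.Tendsto.ennrpow_const
    apply Filter.Tendsto.const_add
    apply ENNReal.Tendsto.mul_const _ (Or.inr (measure_ne_top _ _))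
    have := (Filter.tendsto_add_atTop_iff_nat 1).2 ENNReal.tendsto_inv_nat_nhds_zero
    simpa using this
  have := ge_of_tendsto' lim step
  simpa using this

theorem plancherel_le (f : E3 → ℂ) (h1 : Integrable f) :
    ∫⁻ x, ‖𝓕 f x‖ₑ ^ (2:ℝ) ≤ ∫⁻ x, ‖f x‖ₑ ^ (2:ℝ) := by
  by_cases ht : ∫⁻ x, ‖f x‖ₑ ^ (2:ℝ) = ∞
  · rw [ht]; exact le_top
  have h2 : MemLp f 2 := by
    refine ⟨h1.1, ?_⟩
    rw [eLpNorm_lt_top_iff_lintegral_rpow_enorm_lt_top (by norm_num) (by norm_num)]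
    simpa using lt_top_iff_ne_top.2 ht
  have := plancherel_aux f h1 h2
  rw [eLpNorm_eq_lintegral_rpow_enorm_toReal (by norm_num) (by norm_num),
    eLpNorm_eq_lintegral_rpow_enorm_toReal (by norm_num) (by norm_num)] at this
  simp only [ENNReal.toReal_ofNat] at this
  exact (ENNReal.rpow_left_injective (by norm_num) this).le

theorem inner_int_aux (r : ℝ) (hr : 2 < r) (a M : ℝ) (ha : 0 ≤ a) (hM : 0 < M) :
    ∫⁻ l in Ioi (0:ℝ), ({l | l * a ^ (r/(r-1) - 1) ≤ M}.indicator (fun l => ENNReal.ofReal (4 * l ^ (r-3) * a ^ 2)) l)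
      ≤ ENNReal.ofReal (4 * M ^ (r-2) / (r-2) * a ^ (r/(r-1))) := by
  rcases ha.eq_or_lt with rfl | ha
  · simp
  set c := a ^ (r/(r-1) - 1) with hc
  have hcpos : 0 < c := Real.rpow_pos_of_pos ha _
  have hms : MeasurableSet {l : ℝ | l * c ≤ M} := measurableSet_le (by fun_prop) (by fun_prop)
  rw [lintegral_indicator hms, Measure.restrict_restrict hms]
  have hset : {l : ℝ | l * c ≤ M} ∩ Ioi 0 = Ioc 0 (M / c) := by
    ext l; simp [le_div_iff₀ hcpos, and_comm]
  rw [hset]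
  have hint : IntegrableOn (fun l : ℝ => l ^ (r-3)) (Ioc 0 (M/c)) := by
    rw [← intervalIntegrable_iff_integrableOn_Ioc_of_le (by positivity)]
    exact intervalIntegral.intervalIntegrable_rpow' (by linarith)
  rw [← ofReal_integral_eq_lintegral_ofReal]
  · apply ENNReal.ofReal_le_ofReal
    rw [integral_mul_const, integral_const_mul, ← intervalIntegral.integral_of_le (by positivity),
      integral_rpow (Or.inl (by linarith)), Real.zero_rpow (by linarith)]
    have e : c ^ (r-2) * a ^ (r/(r-1)) = a^2 := by
      rw [hc, ← Real.rpow_mul ha.le, ← Real.rpow_add ha, ← Real.rpow_natCast]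
      congr 1
      have : r - 1 ≠ 0 := by linarith
      field_simp; push_cast; ring
    rw [show r - 3 + 1 = r - 2 by ring, ← e, Real.div_rpow hM.le hcpos.le]
    apply le_of_eq
    have : c ^ (r-2) ≠ 0 := (Real.rpow_pos_of_pos hcpos _).ne'
    have : r - 2 ≠ 0 := by linarith
    field_simp
    ring
  · exact (hint.const_mul 4).mul_const _
  · filter_upwards [ae_restrict_mem measurableSet_Ioc] with l hl
    have := hl.1
    positivity

theorem hy_aux (r : ℝ) (hr : 2 < r) (f : E3 → ℂ) (hf : Measurable f) (h1 : Integrable f) :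
    ∫⁻ x, ‖𝓕 f x‖ₑ ^ r ≤ ENNReal.ofReal (4 * r * 2 ^ (r-2) / (r-2)) * (∫⁻ x, ‖f x‖ₑ ^ (r/(r-1))) ^ (r-1) := by
  have hr1 : 0 < r - 1 := by linarith
  have hp : 0 < r/(r-1) := by positivity
  have hp1 : 0 < r/(r-1) - 1 := by
    rw [show r/(r-1) - 1 = 1/(r-1) by field_simp; ring]; positivity
  have hr2 : 0 < r - 2 := by linarith
  by_cases ht : ∫⁻ x, ‖f x‖ₑ ^ (r/(r-1)) = ∞
  · rw [ht, ENNReal.top_rpow_of_pos hr1, ENNReal.mul_top]; · exact le_top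
    simp; positivity
  by_cases hz : ∫⁻ x, ‖f x‖ₑ ^ (r/(r-1)) = 0
  · rw [lintegral_eq_zero_iff (by fun_prop)] at hz
    have hf0 : f =ᵐ[volume] 0 := by
      filter_upwards [hz] with x hx
      simpa [hp, hp.not_gt] using hx
    have : 𝓕 f = 0 := by
      ext x
      rw [Real.fourier_eq]
      rw [integral_eq_zero_of_ae]; · rfl
      filter_upwards [hf0] with y hy
      simp [hy]
    rw [this]
    simp [show 0 < r by linarith]
  set m := (∫⁻ x, ‖f x‖ₑ ^ (r/(r-1))).toReal with hm
  have hm0 : 0 < m := ENNReal.toReal_pos hz ht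
  have hmeq : ∫⁻ x, ‖f x‖ₑ ^ (r/(r-1)) = ENNReal.ofReal m := (ENNReal.ofReal_toReal ht).symm
  have hcont : Continuous (𝓕 f) :=
    VectorFourier.fourierIntegral_continuous (μ := (volume : Measure E3)) (L := innerₗ E3) Real.continuous_fourierChar
      (by exact continuous_inner) h1
  have hlayer := lintegral_rpow_eq_lintegral_meas_lt_mul (μ := (volume : Measure E3)) (f := fun x => ‖𝓕 f x‖) (Filter.Eventually.of_forall fun x => norm_nonneg _) hcont.norm.aemeasurable (p := r) (by linarith)
  have hen : ∀ z : ℂ, ∀ q : ℝ, 0 ≤ q → ‖z‖ₑ ^ q = ENNReal.ofReal (‖z‖ ^ q) := by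
    intro z q hq
    rw [← ofReal_norm, ENNReal.ofReal_rpow_of_nonneg (norm_nonneg _) hq]
  have hLHS : ∫⁻ x, ‖𝓕 f x‖ₑ ^ r = ∫⁻ x, ENNReal.ofReal (‖𝓕 f x‖ ^ r) := by
    apply lintegral_congr; intro x; exact hen _ _ (by linarith)
  rw [hLHS, hlayer]
  -- the level set bound
  have hlev : ∀ l ∈ Ioi (0:ℝ), volume {x | l < ‖𝓕 f x‖} * ENNReal.ofReal (l ^ (r-1)) ≤
      ∫⁻ y, ({l | l * ‖f y‖ ^ (r/(r-1) - 1) ≤ 2*m}.indicator (fun l => ENNReal.ofReal (4 * l ^ (r-3) * ‖f y‖ ^ 2)) l) := by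
    intro l hl
    have hl : 0 < l := hl
    let S : Set E3 := {y | l * ‖f y‖ ^ (r/(r-1) - 1) ≤ 2*m}
    have hS : MeasurableSet S := measurableSet_le (by fun_prop) (by fun_prop)
    have hsi : Integrable (S.indicator f) := h1.indicator hS
    have hbi : Integrable (Sᶜ.indicator f) := h1.indicator hS.compl
    have hsum : ∀ x, 𝓕 f x = 𝓕 (S.indicator f) x + 𝓕 (Sᶜ.indicator f) x := by
      intro x
      rw [Real.fourier_eq, Real.fourier_eq, Real.fourier_eq, ← integral_add]
      · apply integral_congr_ae
        refine Filter.Eventually.of_forall fun y => ?_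
        simp only
        rw [← smul_add]
        congr 1
        by_cases hy : y ∈ S <;> simp [hy]
      · exact (Real.fourierIntegral_convergent_iff x).2 hsi
      · exact (Real.fourierIntegral_convergent_iff x).2 hbi
    have hbig : ∀ x, ‖𝓕 (Sᶜ.indicator f) x‖ ≤ l / 2 := by
      intro x
      have : ‖𝓕 (Sᶜ.indicator f) x‖ ≤ ∫ y, ‖Sᶜ.indicator f y‖ := VectorFourier.norm_fourierIntegral_le_integral_norm _ _ _ _ _
      refine this.trans ?_
      rw [integral_norm_eq_lintegral_enorm hbi.1]
      apply ENNReal.toReal_le_of_le_ofReal (by positivity)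
      calc ∫⁻ y, ‖Sᶜ.indicator f y‖ₑ ≤ ∫⁻ y, ENNReal.ofReal (l/(2*m)) * ‖f y‖ₑ ^ (r/(r-1)) := by
            apply lintegral_mono
            intro y
            by_cases hy : y ∈ S
            · simp [hy]
            · simp only [mem_compl_iff, hy, not_false_eq_true, indicator_of_mem]
              rw [hen _ _ hp.le, ← ENNReal.ofReal_mul (by positivity), ← ofReal_norm]
              apply ENNReal.ofReal_le_ofReal
              have hy' : 2*m < l * ‖f y‖ ^ (r/(r-1) - 1) := not_le.1 hy
              have hpos : 0 < ‖f y‖ := by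
                rcases (norm_nonneg (f y)).eq_or_lt with h | h
                · rw [← h, Real.zero_rpow hp1.ne'] at hy'; linarith
                · exact h
              rw [show ‖f y‖ ^ (r/(r-1)) = ‖f y‖ ^ (r/(r-1) - 1) * ‖f y‖ by
                rw [← Real.rpow_add_one hpos.ne']; congr 1; ring]
              rw [div_mul_eq_mul_div, le_div_iff₀ (by positivity)]
              nlinarith
        _ = ENNReal.ofReal (l/2) := by
            rw [lintegral_const_mul _ (by fun_prop), hmeq, ← ENNReal.ofReal_mul (by positivity)]
            congr 1; field_simp
    have hsub : {x | l < ‖𝓕 f x‖} ⊆ {x | ENNReal.ofReal ((l/2)^2) ≤ ‖𝓕 (S.indicator f) x‖ₑ ^ (2:ℝ)} := by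
      intro x hx
      have hx : l < ‖𝓕 f x‖ := hx
      simp only [mem_ofPred_eq]
      rw [hen _ _ (by norm_num)]
      apply ENNReal.ofReal_le_ofReal
      have h3 := norm_add_le (𝓕 (S.indicator f) x) (𝓕 (Sᶜ.indicator f) x)
      rw [← hsum] at h3
      have h4 := hbig x
      rw [Real.rpow_two]
      apply pow_le_pow_left₀ (by positivity)
      linarith
    have hcs : Continuous (𝓕 (S.indicator f)) :=
      VectorFourier.fourierIntegral_continuous (μ := (volume : Measure E3)) (L := innerₗ E3) Real.continuous_fourierChar
        (by exact continuous_inner) hsi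
    have hcheb := mul_meas_ge_le_lintegral₀ (μ := (volume : Measure E3)) (f := fun x => ‖𝓕 (S.indicator f) x‖ₑ ^ (2:ℝ)) (by fun_prop) (ENNReal.ofReal ((l/2)^2))
    have hp2 := hcheb.trans (plancherel_le _ hsi)
    calc volume {x | l < ‖𝓕 f x‖} * ENNReal.ofReal (l ^ (r-1)) 
        ≤ volume {x | ENNReal.ofReal ((l/2)^2) ≤ ‖𝓕 (S.indicator f) x‖ₑ ^ (2:ℝ)} * ENNReal.ofReal (l ^ (r-1)) := by
          gcongr
      _ = ENNReal.ofReal (4 * l ^ (r-3)) * (ENNReal.ofReal ((l/2)^2) * volume {x | ENNReal.ofReal ((l/2)^2) ≤ ‖𝓕 (S.indicator f) x‖ₑ ^ (2:ℝ)}) := by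
          rw [← mul_assoc, ← ENNReal.ofReal_mul (by positivity), mul_comm]
          congr 2
          rw [show r - 1 = (r-3) + 2 by ring, Real.rpow_add hl, Real.rpow_two]
          ring
      _ ≤ ENNReal.ofReal (4 * l ^ (r-3)) * ∫⁻ x, ‖S.indicator f x‖ₑ ^ (2:ℝ) := by gcongr
      _ = ∫⁻ x, ENNReal.ofReal (4 * l ^ (r-3)) * ‖S.indicator f x‖ₑ ^ (2:ℝ) := by
          rw [lintegral_const_mul' _ _ ENNReal.ofReal_ne_top]
      _ = _ := by
          apply lintegral_congr
          intro y
          by_cases hy : y ∈ S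
          · have hy' : l ∈ {l | l * ‖f y‖ ^ (r/(r-1) - 1) ≤ 2*m} := hy
            rw [indicator_of_mem hy, indicator_of_mem hy', hen _ _ (by norm_num), ← ENNReal.ofReal_mul (by positivity), Real.rpow_two]
          · have hy' : l ∉ {l | l * ‖f y‖ ^ (r/(r-1) - 1) ≤ 2*m} := hy
            rw [indicator_of_notMem hy, indicator_of_notMem hy']
            simp
  calc _ ≤ ENNReal.ofReal r * ∫⁻ l in Ioi (0:ℝ), ∫⁻ y, ({l | l * ‖f y‖ ^ (r/(r-1) - 1) ≤ 2*m}.indicator (fun l => ENNReal.ofReal (4 * l ^ (r-3) * ‖f y‖ ^ 2)) l) := by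
        refine mul_le_mul' le_rfl ?_
        exact setLIntegral_mono' measurableSet_Ioi hlev
    _ = ENNReal.ofReal r * ∫⁻ y, ∫⁻ l in Ioi (0:ℝ), ({l | l * ‖f y‖ ^ (r/(r-1) - 1) ≤ 2*m}.indicator (fun l => ENNReal.ofReal (4 * l ^ (r-3) * ‖f y‖ ^ 2)) l) := by
        rw [lintegral_lintegral_swap]
        have hT : MeasurableSet {q : ℝ × E3 | q.1 * ‖f q.2‖ ^ (r/(r-1) - 1) ≤ 2*m} := measurableSet_le (by fun_prop) (by fun_prop)
        have : Measurable (fun q : ℝ × E3 => ENNReal.ofReal (4 * q.1 ^ (r-3) * ‖f q.2‖ ^ 2)) := by fun_prop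
        exact (this.indicator hT).aemeasurable
    _ ≤ ENNReal.ofReal r * ∫⁻ y, ENNReal.ofReal (4 * (2*m) ^ (r-2) / (r-2)) * ‖f y‖ₑ ^ (r/(r-1)) := by
        refine mul_le_mul' le_rfl ?_
        apply lintegral_mono
        intro y
        refine (inner_int_aux r hr ‖f y‖ (2*m) (norm_nonneg _) (by positivity)).trans ?_
        simp only
        rw [hen _ _ hp.le, ← ENNReal.ofReal_mul (by positivity)]
    _ = _ := by
        rw [lintegral_const_mul _ (by fun_prop), hmeq, ENNReal.ofReal_rpow_of_pos hm0,
          ← ENNReal.ofReal_mul (by positivity), ← ENNReal.ofReal_mul (by positivity), ← ENNReal.ofReal_mul (by positivity)]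
        congr 1
        rw [show r - 1 = (r-2) + 1 by ring, Real.rpow_add_one hm0.ne', Real.mul_rpow (by norm_num) hm0.le]
        ring

theorem lintegral_smul_aux (c : ℝ) (hc : 0 < c) (h : E3 → ℝ≥0∞) (hh : Measurable h) :
    ∫⁻ x, h (c⁻¹ • x) = ENNReal.ofReal (c ^ 3) * ∫⁻ x, h x := by
  have e := Measure.map_addHaar_smul (volume : Measure E3) (r := c⁻¹) (by positivity)
  rw [← lintegral_map (μ := (volume : Measure E3)) hh (measurable_const_smul c⁻¹), e, lintegral_smul_measure]
  simp [abs_of_pos hc]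

theorem schrod_enorm (τ : ℝ) (hτ : 0 < τ) (f : E3 → ℂ) (x : E3) :
    ‖schrod 3 τ f x‖ₑ = ENNReal.ofReal ((4 * π * τ) ^ (-(3/2) : ℝ)) *
      ‖𝓕 (fun y => Complex.exp (Complex.I * ((‖y‖ ^ 2 : ℝ) : ℂ) / (4 * (τ : ℂ))) * f y) ((4 * π * τ)⁻¹ • x)‖ₑ := by
  have hπ := Real.pi_pos
  rw [schrod, if_neg hτ.ne', enorm_mul]
  congr 1
  · rw [← ofReal_norm, Complex.norm_cpow_of_ne_zero]
    · congr 1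
      have : (-((3:ℕ) : ℂ) / 2) = ((-(3/2) : ℝ) : ℂ) := by push_cast; ring
      rw [this, Complex.ofReal_re, Complex.ofReal_im]
      simp [abs_of_pos hπ, abs_of_pos hτ]
    · simp [hπ.ne', hτ.ne']
  · rw [Real.fourier_eq']
    have : ∀ y, Complex.exp (Complex.I * ((‖x - y‖ ^ 2 : ℝ) : ℂ) / (4 * (τ : ℂ))) * f y =
        Complex.exp (((‖x‖ ^ 2 / (4 * τ) : ℝ) : ℂ) * Complex.I) *
        (Complex.exp (↑(-2 * π * inner ℝ y ((4 * π * τ)⁻¹ • x)) * Complex.I) • (Complex.exp (Complex.I * ((‖y‖ ^ 2 : ℝ) : ℂ) / (4 * (τ : ℂ))) * f y)) := by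
      intro y
      rw [smul_eq_mul, ← mul_assoc, ← mul_assoc, ← Complex.exp_add, ← Complex.exp_add]
      congr 2
      rw [inner_smul_right, norm_sub_sq_real, real_inner_comm]
      push_cast
      have h1 : (τ : ℂ) ≠ 0 := by exact_mod_cast hτ.ne'
      have h2 : (π : ℂ) ≠ 0 := by exact_mod_cast hπ.ne'
      field_simp
      ring
    simp_rw [this]
    rw [integral_const_mul, enorm_mul]
    have : ‖Complex.exp (((‖x‖ ^ 2 / (4 * τ) : ℝ) : ℂ) * Complex.I)‖ₑ = 1 := by
      rw [← ofReal_norm, Complex.norm_exp_ofReal_mul_I]; simp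
    rw [this, one_mul]

theorem phase_enorm (τ a : ℝ) : ‖Complex.exp (Complex.I * (a : ℂ) / (4 * (τ : ℂ)))‖ = 1 := by
  have : Complex.I * (a : ℂ) / (4 * (τ : ℂ)) = ((a / (4 * τ) : ℝ) : ℂ) * Complex.I := by
    push_cast; ring
  rw [this, Complex.norm_exp_ofReal_mul_I]

theorem dispersive_aux (r : ℝ) (hr : 2 < r) (τ : ℝ) (hτ : 0 < τ) (f : E3 → ℂ) (hf : Measurable f) :
    ∫⁻ x, ‖schrod 3 τ f x‖ₑ ^ r ≤ ENNReal.ofReal (4 * r * 2 ^ (r-2) / (r-2) * (4 * π * τ) ^ (3 - 3 * r / 2)) *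
      (∫⁻ x, ‖f x‖ₑ ^ (r/(r-1))) ^ (r-1) := by
  have hπ := Real.pi_pos
  have hr0 : 0 < r := by linarith
  have hr2 : 0 < r - 2 := by linarith
  set g : E3 → ℂ := fun y => Complex.exp (Complex.I * ((‖y‖ ^ 2 : ℝ) : ℂ) / (4 * (τ : ℂ))) * f y with hg
  have hgm : Measurable g := by fun_prop
  have hgn : ∀ y, ‖g y‖ = ‖f y‖ := by
    intro y
    rw [hg]; simp only; rw [norm_mul, phase_enorm, one_mul]
  have hge : ∀ y, ‖g y‖ₑ = ‖f y‖ₑ := fun y => by rw [← ofReal_norm, hgn, ofReal_norm]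
  have hc : 0 < 4 * π * τ := by positivity
  by_cases hi : Integrable g
  · have hcont : Continuous (𝓕 g) :=
      VectorFourier.fourierIntegral_continuous (μ := (volume : Measure E3)) (L := innerₗ E3) Real.continuous_fourierChar
        (by exact continuous_inner) hi
    have hhy := hy_aux r hr g hgm hi
    simp_rw [hge] at hhy
    simp_rw [schrod_enorm τ hτ, ENNReal.mul_rpow_of_nonneg _ _ hr0.le]
    rw [lintegral_const_mul' _ _ (by simp [hr0.le]), 
      lintegral_smul_aux _ hc (fun x => ‖𝓕 g x‖ₑ ^ r) (by fun_prop)]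
    calc _ ≤ _ := mul_le_mul' le_rfl (mul_le_mul' le_rfl hhy)
      _ = _ := by
        rw [← mul_assoc, ← mul_assoc, ENNReal.ofReal_rpow_of_pos (by positivity), ← ENNReal.ofReal_mul (by positivity), ← ENNReal.ofReal_mul (by positivity)]
        congr 2
        rw [← Real.rpow_mul hc.le, ← Real.rpow_natCast, ← Real.rpow_add hc, mul_comm]
        congr 2
        push_cast; ring
  · have : ∀ x, schrod 3 τ f x = 0 := by
      intro x
      rw [schrod, if_neg hτ.ne']
      rw [integral_undef, mul_zero]
      intro h
      apply hi
      refine h.mono hgm.aestronglyMeasurable (Filter.Eventually.of_forall fun y => ?_)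
      rw [hgn, norm_mul, phase_enorm, one_mul]
    simp [this, hr0]

theorem nonlin_enorm (r : ℝ) (hr : 2 < r) (f : E3 → ℂ) (x : E3) :
    ‖nonlin (4/3) f x‖ₑ ^ (r/(r-1)) = ‖f x‖ₑ ^ (7 * r / (3 * (r-1))) := by
  have hr1 : 0 < r - 1 := by linarith
  have hr0 : 0 < r := by linarith
  have : ‖nonlin (4/3) f x‖ = ‖f x‖ ^ (7/3 : ℝ) := by
    rw [nonlin, norm_mul, Complex.norm_real, Real.norm_of_nonneg (by positivity)]
    rw [← Real.rpow_add_one' (norm_nonneg _) (by norm_num)]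
    norm_num
  rw [← ofReal_norm, this, ← ofReal_norm, ENNReal.ofReal_rpow_of_nonneg (by positivity) (by positivity), ENNReal.ofReal_rpow_of_nonneg (by positivity) (by positivity), ← Real.rpow_mul (norm_nonneg _)]
  congr 2
  field_simp

theorem G_meas_aux (t : ℝ) (v : ℝ → E3 → ℂ) (hv : Measurable (Function.uncurry v)) :
    Measurable (Function.uncurry fun (s : ℝ) (x : E3) =>
      ‖(4 * (Real.pi : ℂ) * Complex.I * ((t - s : ℝ) : ℂ)) ^ (-((3:ℕ) : ℂ) / 2) *
      ∫ y, Complex.exp (Complex.I * ((‖x - y‖ ^ 2 : ℝ) : ℂ) / (4 * ((t - s : ℝ) : ℂ))) * v s y‖ₑ) := by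
  have h0 : Measurable (fun q : (ℝ × E3) × E3 => Function.uncurry v (q.1.1, q.2)) :=
    hv.comp ((measurable_fst.comp measurable_fst).prodMk measurable_snd)
  have h1 : Measurable (fun q : (ℝ × E3) × E3 => Complex.exp (Complex.I * ((‖q.1.2 - q.2‖ ^ 2 : ℝ) : ℂ) / (4 * ((t - q.1.1 : ℝ) : ℂ))) * Function.uncurry v (q.1.1, q.2)) := by
    refine Measurable.mul ?_ h0
    fun_prop
  have h2 := h1.stronglyMeasurable.integral_prod_right' (ν := (volume : Measure E3))
  have h3 : Measurable (fun p : ℝ × E3 => (4 * (Real.pi : ℂ) * Complex.I * ((t - p.1 : ℝ) : ℂ)) ^ (-((3:ℕ) : ℂ) / 2)) := by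
    fun_prop
  exact (h3.mul h2.measurable).enorm

set_option maxHeartbeats 1000000 in
/-- **Three-dimensional early-time piece estimate.**  Fix `2 < r < 6`.  For any `t > 0`,
`A > 0`, any measurable interval `I ⊆ [0, min (t/2) A]`, and any measurable `u` on `I × ℝ³`,
`‖∫_I e^{i(t-s)Δ}(|u|^{4/3}u)(s) ds‖_{L^r_x} ≤ C t^{-3(1/2-1/r)} A^{3(r-2)/(4r)}
  ‖u‖^{7/3}_{L^{28r/(3(r+6))}_s L^{7r/(3(r-1))}_x(I×ℝ³)}`, with `C = C(r)`. -/
theorem early_time_piece_3d (r : ℝ) (hr : 2 < r) (hr6 : r < 6) :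
    ∃ C : ℝ, 0 < C ∧
      ∀ t : ℝ, 0 < t → ∀ A : ℝ, 0 < A →
        ∀ I : Set ℝ, MeasurableSet I → I.OrdConnected → I ⊆ Set.Icc 0 (min (t / 2) A) →
          ∀ u : ℝ → EuclideanSpace ℝ (Fin 3) → ℂ, Measurable (Function.uncurry u) →
            eLpNorm (fun x => ∫ s in I, schrod 3 (t - s) (nonlin (4 / 3) (u s)) x)
                (ENNReal.ofReal r) volume ≤
              ENNReal.ofReal (C * t ^ (-(3 * (1 / 2 - 1 / r))) * A ^ (3 * (r - 2) / (4 * r))) *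
                mixedNorm volume I (ENNReal.ofReal (28 * r / (3 * (r + 6))))
                    (ENNReal.ofReal (7 * r / (3 * (r - 1)))) u ^ ((7 : ℝ) / 3) := by
  have hπ := Real.pi_pos
  have hr0 : 0 < r := by linarith
  have hr1 : 0 < r - 1 := by linarith
  have hr2 : 0 < r - 2 := by linarith
  have hK : 0 < 4 * r * 2 ^ (r-2) / (r-2) * (2 * π) ^ (3 - 3 * r / 2) := by positivity
  set K := 4 * r * 2 ^ (r-2) / (r-2) * (2 * π) ^ (3 - 3 * r / 2) with hKdef
  refine ⟨K ^ (1/r), by positivity, ?_⟩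
  intro t ht A hA I hI _ hIsub u hu
  have hus : ∀ s, Measurable (u s) := fun s => hu.comp (measurable_const.prodMk measurable_id)
  have hnl : Measurable (Function.uncurry fun s => nonlin (4/3) (u s)) := by
    have : Measurable (fun p : ℝ × E3 => ((‖u p.1 p.2‖ ^ (4/3 : ℝ) : ℝ) : ℂ) * u p.1 p.2) := by
      have hu' : Measurable (fun p : ℝ × E3 => u p.1 p.2) := hu
      fun_prop
    exact this
  have hnls : ∀ s, Measurable (nonlin (4/3) (u s)) := by
    intro s
    have h := hus s
    unfold nonlin
    fun_prop
  have hIvol : volume I ≤ ENNReal.ofReal A := by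
    calc volume I ≤ volume (Icc 0 A) := measure_mono (hIsub.trans (Icc_subset_Icc_right (min_le_right _ _)))
      _ = _ := by simp
  have : IsFiniteMeasure (volume.restrict I) := ⟨by simpa using hIvol.trans_lt ENNReal.ofReal_lt_top⟩
  set N : ℝ → ℝ≥0∞ := fun s => ∫⁻ x, ‖u s x‖ₑ ^ (7 * r / (3 * (r-1))) with hN
  have hNm : Measurable N := by
    have : Measurable (fun p : ℝ × E3 => ‖u p.1 p.2‖ₑ ^ (7 * r / (3 * (r-1)))) := by
      have hu' : Measurable (fun p : ℝ × E3 => u p.1 p.2) := hu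
      fun_prop
    exact this.lintegral_prod_right'
  set G : ℝ → E3 → ℝ≥0∞ := fun s x => ‖(4 * (Real.pi : ℂ) * Complex.I * ((t - s : ℝ) : ℂ)) ^ (-((3:ℕ) : ℂ) / 2) *
      ∫ y, Complex.exp (Complex.I * ((‖x - y‖ ^ 2 : ℝ) : ℂ) / (4 * ((t - s : ℝ) : ℂ))) * nonlin (4/3) (u s) y‖ₑ with hG
  have hGm : Measurable (Function.uncurry G) := by
    exact G_meas_aux t _ hnl
  have hGeq : ∀ s ∈ I, ∀ x, ‖schrod 3 (t - s) (nonlin (4 / 3) (u s)) x‖ₑ = G s x := by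
    intro s hs x
    have := (hIsub hs).2.trans (min_le_left _ _)
    rw [schrod, if_neg (by linarith)]
  set W : ℝ → ℝ≥0∞ := fun s => ENNReal.ofReal (K ^ (1/r) * t ^ (-(3 * (1 / 2 - 1 / r)))) * N s ^ ((r-1)/r) with hW
  have hbound : ∀ᵐ s ∂(volume.restrict I), ∫⁻ x, G s x ^ r ≤ W s ^ r := by
    filter_upwards [ae_restrict_mem hI] with s hs
    have hst := (hIsub hs).2.trans (min_le_left _ _)
    have hd := dispersive_aux r hr (t - s) (by linarith) (nonlin (4/3) (u s)) (hnls s)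
    simp_rw [nonlin_enorm r hr, hGeq s hs] at hd
    refine hd.trans ?_
    rw [hW]; simp only
    rw [ENNReal.mul_rpow_of_nonneg _ _ hr0.le, ← ENNReal.rpow_mul, div_mul_cancel₀ _ hr0.ne', ENNReal.ofReal_rpow_of_pos (by positivity)]
    refine mul_le_mul' (ENNReal.ofReal_le_ofReal ?_) le_rfl
    rw [Real.mul_rpow (x := K ^ (1/r)) (by positivity) (by positivity), ← Real.rpow_mul hK.le, one_div_mul_cancel hr0.ne', Real.rpow_one, ← Real.rpow_mul ht.le, hKdef, mul_assoc (4 * r * 2 ^ (r-2) / (r-2))]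
    refine mul_le_mul_of_nonneg_left (a := 4 * r * 2 ^ (r-2) / (r-2)) ?_ (by positivity)
    rw [show -(3 * (1 / 2 - 1 / r)) * r = 3 - 3 * r / 2 by field_simp; ring, ← Real.mul_rpow (by positivity) ht.le]
    apply Real.rpow_le_rpow_of_nonpos (by positivity)
    · nlinarith
    · linarith
  have hmink := minkowski_aux (volume : Measure E3) (volume.restrict I) G hGm r (by linarith) W (by fun_prop) hbound
  -- Hölder in time
  have hhold : ∫⁻ s in I, N s ^ ((r-1)/r) ≤ ENNReal.ofReal (A ^ (3 * (r - 2) / (4 * r))) * (∫⁻ s in I, N s ^ (4*(r-1)/(r+6))) ^ ((r+6)/(4*r)) := by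
    have hconj : (4*r/(3*(r-2))).HolderConjugate (4*r/(r+6)) := by
      rw [Real.holderConjugate_iff]
      constructor
      · rw [lt_div_iff₀ (by positivity)]; linarith
      · field_simp; ring
    have := ENNReal.lintegral_mul_le_Lp_mul_Lq (volume.restrict I) hconj (f := fun _ => 1) (g := fun s => N s ^ ((r-1)/r)) (by fun_prop) (by fun_prop)
    simp only [Pi.mul_apply, one_mul, ENNReal.one_rpow, lintegral_one, Measure.restrict_apply_univ, one_div_div, ← ENNReal.rpow_mul] at this
    refine this.trans ?_
    rw [← ENNReal.ofReal_rpow_of_pos hA]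
    refine mul_le_mul' (ENNReal.rpow_le_rpow hIvol (by positivity)) (le_of_eq ?_)
    congr 2
    ext s
    congr 1
    field_simp
  have hmix : mixedNorm volume I (ENNReal.ofReal (28 * r / (3 * (r + 6))))
                    (ENNReal.ofReal (7 * r / (3 * (r - 1)))) u ^ ((7 : ℝ) / 3) = (∫⁻ s in I, N s ^ (4*(r-1)/(r+6))) ^ ((r+6)/(4*r)) := by
    have hq : 0 < 7 * r / (3 * (r - 1)) := by positivity
    have hp : 0 < 28 * r / (3 * (r + 6)) := by positivity
    rw [mixedNorm, if_neg ENNReal.ofReal_ne_top, ENNReal.toReal_ofReal hp.le, ← ENNReal.rpow_mul]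
    congr 1
    · apply lintegral_congr
      intro s
      rw [eLpNorm_eq_lintegral_rpow_enorm_toReal (by simpa using hq) ENNReal.ofReal_ne_top, ENNReal.toReal_ofReal hq.le, ← ENNReal.rpow_mul]
      congr 1
      field_simp; norm_num
    · field_simp; norm_num
  rw [hmix, eLpNorm_eq_lintegral_rpow_enorm_toReal (by simpa using hr0) ENNReal.ofReal_ne_top, ENNReal.toReal_ofReal hr0.le]
  calc _ ≤ (∫⁻ x, (∫⁻ s in I, G s x) ^ r) ^ (1/r) := by
        refine ENNReal.rpow_le_rpow (lintegral_mono fun x => ENNReal.rpow_le_rpow ?_ hr0.le) (by positivity)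
        refine (enorm_integral_le_lintegral_enorm _).trans (le_of_eq ?_)
        exact setLIntegral_congr_fun hI fun s hs => hGeq s hs x
    _ ≤ ((∫⁻ s in I, W s) ^ r) ^ (1/r) := ENNReal.rpow_le_rpow hmink (by positivity)
    _ = ∫⁻ s in I, W s := by rw [← ENNReal.rpow_mul, mul_one_div_cancel hr0.ne', ENNReal.rpow_one]
    _ = ENNReal.ofReal (K ^ (1/r) * t ^ (-(3 * (1 / 2 - 1 / r)))) * ∫⁻ s in I, N s ^ ((r-1)/r) := by
        rw [hW, lintegral_const_mul' _ _ ENNReal.ofReal_ne_top]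
    _ ≤ _ := by
        rw [ENNReal.ofReal_mul (p := K ^ (1/r) * t ^ (-(3 * (1 / 2 - 1 / r)))) (by positivity), mul_assoc (ENNReal.ofReal _)]
        exact mul_le_mul' le_rfl hhold
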